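/- There exist a free group 𝔽' and an injective endomorphism Φ : 𝔽' → 𝔽' such that the mapping torus M(Φ) is isomorphic to the mapping torus M(Ψ). -/

import Mathlib

/-- Given `J ⊆ I`, the free factor `F = ⟨e_j : j ∈ J⟩` of the free group `G` on `I`. -/
def freeFactor {I : Type} (J : Set I) : Subgroup (FreeGroup I) :=
  Subgroup.closure (FreeGroup.of '' J)

/-- The relators `t e_j t⁻¹ Ψ(e_j)⁻¹ (j ∈ J)` of the mapping torus `M(Ψ)` of an injective
homomorphism `Ψ : F → G` from the free factor `F = ⟨e_j : j ∈ J⟩` of the free group `G` on `I`;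
the generator `none` plays the role of the stable letter `t`. -/
def mtRelsRel {I : Type} (J : Set I) (Ψ : freeFactor J →* FreeGroup I) :
    Set (FreeGroup (Option I)) :=
  Set.range fun j : J =>
    FreeGroup.of (none : Option I) * FreeGroup.of (some (j : I)) *
      (FreeGroup.of (none : Option I))⁻¹ *
      (FreeGroup.map some
        (Ψ ⟨FreeGroup.of (j : I),
          Subgroup.subset_closure (Set.mem_image_of_mem _ j.2)⟩))⁻¹

/-- The mapping torus `M(Ψ) = ⟨t, eᵢ (i ∈ I) | t e_j t⁻¹ Ψ(e_j)⁻¹ (j ∈ J)⟩`, i.e. the HNN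
extension `G ∗_F` with bonding maps the inclusion of `F` into `G` and `Ψ`. -/
abbrev MTRel {I : Type} (J : Set I) (Ψ : freeFactor J →* FreeGroup I) : Type :=
  PresentedGroup (mtRelsRel J Ψ)

/-- The relators `t e t⁻¹ Φ(e)⁻¹` of the mapping torus of an endomorphism `Φ` of the
free group on a basis `I'`; the generator `none` plays the role of the stable letter `t`. -/
def mtRels {I' : Type} (Φ : FreeGroup I' →* FreeGroup I') : Set (FreeGroup (Option I')) :=
  Set.range fun i : I' =>
    FreeGroup.of (none : Option I') * FreeGroup.of (some i) *
      (FreeGroup.of (none : Option I'))⁻¹ *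
      (FreeGroup.map some (Φ (FreeGroup.of i)))⁻¹

/-- The mapping torus `M(Φ) = ⟨t, e | t e t⁻¹ Φ(e)⁻¹⟩` of an endomorphism `Φ`. -/
abbrev MT {I' : Type} (Φ : FreeGroup I' →* FreeGroup I') : Type := PresentedGroup (mtRels Φ)

open Monoid in
theorem coprodI_lift_injective {ι : Type} {A B : ι → Type} [∀ i, Group (A i)] [∀ i, Group (B i)]
    (f : ∀ i, A i →* B i) (hf : ∀ i, Function.Injective (f i)) :
    Function.Injective (CoprodI.lift fun i => (CoprodI.of (M := B) (i := i)).comp (f i)) := by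
  classical
  rw [injective_iff_map_eq_one]
  intro x hx
  obtain ⟨w, rfl⟩ := (CoprodI.Word.equiv (M := A)).symm.surjective x
  change CoprodI.lift _ w.prod = 1 at hx
  change w.prod = 1
  let w' : CoprodI.Word B :=
    { toList := w.toList.map fun l => ⟨l.1, f l.1 l.2⟩
      ne_one := by
        intro l hl
        obtain ⟨a, ha, rfl⟩ := List.mem_map.1 hl
        exact fun h => w.ne_one a ha (hf _ (h.trans (map_one _).symm))
      chain_ne := by
        rw [List.isChain_map]
        exact w.chain_ne }
  have h1 : w'.prod = 1 := by
    rw [← hx]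
    simp only [CoprodI.Word.prod, map_list_prod, w', List.map_map]
    congr 1
  have h2 : w' = CoprodI.Word.empty :=
    (CoprodI.Word.equiv (M := B)).symm.injective (h1.trans CoprodI.Word.prod_empty.symm)
  have h3 : w.toList = [] := by
    have := congrArg CoprodI.Word.toList h2
    simpa [w', CoprodI.Word.empty] using this
  simp [CoprodI.Word.prod, h3]

/-- Index type of the source summands. -/
def srcIdx (X Y : Type) : Bool → Type
  | true => X
  | false => Y

open Monoid in
/-- A homomorphism from a free group on `X ⊕ Y` is injective when it becomes, after composition,
the free product of two injective homs. -/
theorem injective_of_coprod {X Y Z W : Type} (p : FreeGroup X →* FreeGroup Z)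
    (hp : Function.Injective p) (q : FreeGroup Y →* FreeGroup W) (hq : Function.Injective q)
    {H : Type} [Group H] (Φ : FreeGroup (X ⊕ Y) →* H)
    (β : H →* CoprodI (fun b => FreeGroup (srcIdx Z W b)))
    (h1 : ∀ x, β (Φ (FreeGroup.of (Sum.inl x))) =
      CoprodI.of (M := fun b => FreeGroup (srcIdx Z W b)) (i := true) (p (FreeGroup.of x)))
    (h2 : ∀ y, β (Φ (FreeGroup.of (Sum.inr y))) =
      CoprodI.of (M := fun b => FreeGroup (srcIdx Z W b)) (i := false) (q (FreeGroup.of y))) :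
    Function.Injective Φ := by
  let f : ∀ b, FreeGroup (srcIdx X Y b) →* FreeGroup (srcIdx Z W b) := fun b =>
    match b with
    | true => p
    | false => q
  have hf : ∀ b, Function.Injective (f b) := fun b =>
    match b with
    | true => hp
    | false => hq
  let α : FreeGroup (X ⊕ Y) →* CoprodI (fun b => FreeGroup (srcIdx X Y b)) :=
    FreeGroup.lift (Sum.elim
      (fun x => CoprodI.of (M := fun b => FreeGroup (srcIdx X Y b)) (i := true)
        (FreeGroup.of (α := X) x))
      (fun y => CoprodI.of (M := fun b => FreeGroup (srcIdx X Y b)) (i := false)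
        (FreeGroup.of (α := Y) y)))
  let g : ∀ b, FreeGroup (srcIdx X Y b) →* FreeGroup (X ⊕ Y) := fun b =>
    match b with
    | true => (FreeGroup.map Sum.inl : FreeGroup X →* _)
    | false => (FreeGroup.map Sum.inr : FreeGroup Y →* _)
  have hα : Function.Injective α := by
    have : (CoprodI.lift g).comp α = MonoidHom.id _ := by
      apply FreeGroup.ext_hom
      rintro (x | y)
      · simp only [MonoidHom.comp_apply, α, FreeGroup.lift_apply_of, Sum.elim_inl]
        exact FreeGroup.map.of
      · simp only [MonoidHom.comp_apply, α, FreeGroup.lift_apply_of, Sum.elim_inr]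
        exact FreeGroup.map.of
    exact Function.LeftInverse.injective (g := CoprodI.lift g) (fun x => DFunLike.congr_fun this x)
  have hcomp : β.comp Φ = (CoprodI.lift fun i => (CoprodI.of
      (M := fun b => FreeGroup (srcIdx Z W b)) (i := i)).comp (f i)).comp α := by
    apply FreeGroup.ext_hom
    rintro (x | y)
    · simp only [MonoidHom.comp_apply, α, FreeGroup.lift_apply_of, Sum.elim_inl, h1]
      rfl
    · simp only [MonoidHom.comp_apply, α, FreeGroup.lift_apply_of, Sum.elim_inr, h2]
      rfl
  have : Function.Injective (β.comp Φ) := by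
    rw [hcomp]
    exact (coprodI_lift_injective f hf).comp hα
  exact Function.Injective.of_comp (f := β) this

/-- The new index set. -/
abbrev NewIdx {I : Type} (J : Set I) : Type := J ⊕ ({i : I // i ∉ J} × ℕ)

open Classical in
/-- Inclusion on generators. -/
noncomputable def newGen {I : Type} (J : Set I) (i : I) : NewIdx J :=
  if h : i ∈ J then Sum.inl ⟨i, h⟩ else Sum.inr (⟨i, h⟩, 0)

/-- The free group on `J` mapped to the free factor. -/
def toFactor {I : Type} (J : Set I) : FreeGroup J →* freeFactor J :=
  FreeGroup.lift fun j => ⟨FreeGroup.of (j : I),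
          Subgroup.subset_closure (Set.mem_image_of_mem _ j.2)⟩

theorem toFactor_injective {I : Type} (J : Set I) : Function.Injective (toFactor J) := by
  have : (freeFactor J).subtype.comp (toFactor J) = FreeGroup.map Subtype.val := by
    apply FreeGroup.ext_hom
    intro j
    simp [toFactor]
  have h : Function.Injective ((freeFactor J).subtype.comp (toFactor J)) := by
    rw [this]
    exact FreeGroup.map_injective Subtype.val_injective
  exact Function.Injective.of_comp (f := (freeFactor J).subtype) h

/-- The endomorphism. -/
noncomputable def newEndo {I : Type} (J : Set I) (Ψ : freeFactor J →* FreeGroup I) :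
    FreeGroup (NewIdx J) →* FreeGroup (NewIdx J) :=
  FreeGroup.lift (Sum.elim
    (fun j => FreeGroup.map (newGen J) (Ψ (toFactor J (FreeGroup.of j))))
    (fun y => FreeGroup.of (Sum.inr (y.1, y.2 + 1))))

open Monoid in
theorem newEndo_injective {I : Type} (J : Set I) (Ψ : freeFactor J →* FreeGroup I)
    (hΨ : Function.Injective Ψ) : Function.Injective (newEndo J Ψ) := by
  let M := fun b => FreeGroup (srcIdx I ({i : I // i ∉ J} × ℕ) b)
  let β : FreeGroup (NewIdx J) →* CoprodI M :=
    FreeGroup.lift (Sum.elim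
      (fun j => CoprodI.of (M := M) (i := true) (FreeGroup.of (α := I) (j : I)))
      (fun y => match y with
        | (k, 0) => CoprodI.of (M := M) (i := true) (FreeGroup.of (α := I) (k : I))
        | (k, n + 1) => CoprodI.of (M := M) (i := false)
            (FreeGroup.of (α := {i : I // i ∉ J} × ℕ) (k, n))))
  have hβ : β.comp (FreeGroup.map (newGen J)) = CoprodI.of (M := M) (i := true) := by
    apply FreeGroup.ext_hom
    intro i
    by_cases h : i ∈ J
    · simp [β, newGen, h]
      rfl
    · simp [β, newGen, h]
      rfl
  refine injective_of_coprod (Ψ.comp (toFactor J)) (hΨ.comp (toFactor_injective J))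
    (MonoidHom.id (FreeGroup ({i : I // i ∉ J} × ℕ))) Function.injective_id _ β ?_ ?_
  · intro j
    simp only [newEndo, FreeGroup.lift_apply_of, Sum.elim_inl]
    exact DFunLike.congr_fun hβ _
  · rintro ⟨k, n⟩
    simp [newEndo, β]

section Iso

variable {I : Type} (J : Set I) (Ψ : freeFactor J →* FreeGroup I)

/-- Stable letter and base in `M(Ψ)`. -/
theorem mtRel_rel (j : J) :
    (PresentedGroup.of none : MTRel J Ψ) * PresentedGroup.of (some (j : I)) *
      (PresentedGroup.of none)⁻¹ =
    FreeGroup.lift (fun i => (PresentedGroup.of (some i) : MTRel J Ψ))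
      (Ψ (toFactor J (FreeGroup.of j))) := by
  have h := PresentedGroup.one_of_mem (rels := mtRelsRel J Ψ) ⟨j, rfl⟩
  simp only [map_mul, map_inv, mul_inv_eq_one] at h
  refine Eq.trans h ?_
  have : (PresentedGroup.mk (mtRelsRel J Ψ)).comp (FreeGroup.map some) =
      FreeGroup.lift (fun i => (PresentedGroup.of (some i) : MTRel J Ψ)) := by
    apply FreeGroup.ext_hom
    intro i
    simp [PresentedGroup.of]
  rw [← this]
  simp [toFactor]

theorem mt_rel {I' : Type} (Φ : FreeGroup I' →* FreeGroup I') (i : I') :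
    (PresentedGroup.of none : MT Φ) * PresentedGroup.of (some i) * (PresentedGroup.of none)⁻¹ =
    FreeGroup.lift (fun i => (PresentedGroup.of (some i) : MT Φ)) (Φ (FreeGroup.of i)) := by
  have h := PresentedGroup.one_of_mem (rels := mtRels Φ) ⟨i, rfl⟩
  simp only [map_mul, map_inv, mul_inv_eq_one] at h
  refine Eq.trans h ?_
  have : (PresentedGroup.mk (mtRels Φ)).comp (FreeGroup.map some) =
      FreeGroup.lift (fun i => (PresentedGroup.of (some i) : MT Φ)) := by
    apply FreeGroup.ext_hom
    intro i
    simp [PresentedGroup.of]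
  rw [← this]
  simp

/-- Images of the new generators in `M(Ψ)`. -/
def fwdGen : Option (NewIdx J) → MTRel J Ψ
  | none => PresentedGroup.of none
  | some (Sum.inl j) => PresentedGroup.of (some (j : I))
  | some (Sum.inr (k, n)) => (PresentedGroup.of none) ^ n * PresentedGroup.of (some (k : I)) *
      ((PresentedGroup.of none) ^ n)⁻¹

/-- Images of the old generators in `M(Φ)`. -/
noncomputable def bwdGen : Option I → MT (newEndo J Ψ)
  | none => PresentedGroup.of none
  | some i => PresentedGroup.of (some (newGen J i))

theorem fwdGen_newGen (i : I) :
    fwdGen J Ψ (some (newGen J i)) = PresentedGroup.of (some i) := by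
  by_cases h : i ∈ J
  · simp [newGen, h, fwdGen]
  · simp [newGen, h, fwdGen]

theorem fwd_rels : ∀ r ∈ mtRels (newEndo J Ψ), FreeGroup.lift (fwdGen J Ψ) r = 1 := by
  rintro _ ⟨i, rfl⟩
  simp only [map_mul, map_inv, mul_inv_eq_one, FreeGroup.lift_apply_of]
  rcases i with j | ⟨k, n⟩
  · simp only [newEndo, FreeGroup.lift_apply_of, Sum.elim_inl]
    refine (mtRel_rel J Ψ j).trans ?_
    have : FreeGroup.lift (fun i => (PresentedGroup.of (some i) : MTRel J Ψ)) =
        ((FreeGroup.lift (fwdGen J Ψ)).comp (FreeGroup.map some)).comp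
          (FreeGroup.map (newGen J)) := by
      apply FreeGroup.ext_hom
      intro i
      simp [fwdGen_newGen]
    rw [this]
    rfl
  · simp only [newEndo, FreeGroup.lift_apply_of, Sum.elim_inr, FreeGroup.map.of, fwdGen]
    rw [pow_succ']
    group

theorem bwd_rels : ∀ r ∈ mtRelsRel J Ψ, FreeGroup.lift (bwdGen J Ψ) r = 1 := by
  rintro _ ⟨j, rfl⟩
  simp only [map_mul, map_inv, mul_inv_eq_one, FreeGroup.lift_apply_of]
  have h := mt_rel (newEndo J Ψ) (Sum.inl j)
  have hj : newGen J (j : I) = Sum.inl j := by simp [newGen]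
  simp only [bwdGen, hj]
  refine h.trans ?_
  simp only [newEndo, FreeGroup.lift_apply_of, Sum.elim_inl]
  have : (FreeGroup.lift (fun i => (PresentedGroup.of (some i) : MT (newEndo J Ψ)))).comp
      (FreeGroup.map (newGen J)) = (FreeGroup.lift (bwdGen J Ψ)).comp (FreeGroup.map some) := by
    apply FreeGroup.ext_hom
    intro i
    simp [bwdGen]
  have h2 := DFunLike.congr_fun this (Ψ (toFactor J (FreeGroup.of j)))
  simp only [toFactor, FreeGroup.lift_apply_of] at h2 ⊢
  exact h2

theorem mt_conj (k : {i : I // i ∉ J}) (n : ℕ) :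
    (PresentedGroup.of none : MT (newEndo J Ψ)) ^ n *
      PresentedGroup.of (some (Sum.inr (k, 0))) * ((PresentedGroup.of none) ^ n)⁻¹ =
    PresentedGroup.of (some (Sum.inr (k, n))) := by
  induction n with
  | zero => simp
  | succ n ih =>
    have h := mt_rel (newEndo J Ψ) (Sum.inr (k, n))
    have hE : newEndo J Ψ (FreeGroup.of (Sum.inr (k, n))) =
        FreeGroup.of (Sum.inr (k, n + 1)) := by
      simp [newEndo]
    rw [hE, FreeGroup.lift_apply_of] at h
    rw [← h, ← ih, pow_succ']
    group

/-- The isomorphism. -/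
noncomputable def torusIso : MT (newEndo J Ψ) ≃* MTRel J Ψ :=
  MonoidHom.toMulEquiv (PresentedGroup.toGroup (fwd_rels J Ψ))
    (PresentedGroup.toGroup (bwd_rels J Ψ))
    (by
      apply PresentedGroup.ext
      rintro (_ | j | ⟨k, n⟩)
      · simp [fwdGen, bwdGen]
      · simp [fwdGen, bwdGen, newGen]
      · have hk : newGen J (k : I) = Sum.inr (k, 0) := by simp [newGen, k.2]
        simp only [MonoidHom.comp_apply, PresentedGroup.toGroup.of, fwdGen, map_mul, map_inv,
          map_pow, bwdGen, hk, MonoidHom.id_apply]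
        exact mt_conj J Ψ k n)
    (by
      apply PresentedGroup.ext
      rintro (_ | i)
      · simp [fwdGen, bwdGen]
      · simp [bwdGen, fwdGen_newGen])

end Iso

/-- There exist a free group `𝔽'` and an injective endomorphism `Φ : 𝔽' → 𝔽'` such that the
mapping torus `M(Φ)` is isomorphic to the mapping torus `M(Ψ)`. -/
theorem mappingTorusRel_iso_mappingTorus {I : Type} (J : Set I)
    (Ψ : freeFactor J →* FreeGroup I) (hΨ : Function.Injective Ψ) :
    ∃ (I' : Type) (Φ : FreeGroup I' →* FreeGroup I'),
      Function.Injective Φ ∧ Nonempty (MT Φ ≃* MTRel J Ψ) :=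
  ⟨NewIdx J, newEndo J Ψ, newEndo_injective J Ψ hΨ, ⟨torusIso J Ψ⟩⟩
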